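/- Unbiased-strategy factorization for Call-by-Value: for all λ-terms M and N, if M →βv* N then there exists a term U with M ⊳* U and U ⋫* N (where * denotes reflexive-transitive closure). -/

import Mathlib

/-- Untyped λ-terms in de Bruijn representation. -/
inductive Tm : Type
  | var : ℕ → Tm
  | lam : Tm → Tm
  | app : Tm → Tm → Tm
deriving DecidableEq

namespace Tm

/-- Lift (shift by one) the free variables of index `≥ d`. -/
def lift (d : ℕ) : Tm → Tm
  | var n => if n < d then var n else var (n + 1)
  | lam M => lam (lift (d + 1) M)
  | app M N => app (lift d M) (lift d N)

/-- Capture-avoiding substitution `M[N/k]` of `N` for the free variable `k` in `M`. -/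
def subst : Tm → ℕ → Tm → Tm
  | var n, k, N => if n = k then N else if k < n then var (n - 1) else var n
  | lam M, k, N => lam (subst M (k + 1) (lift 0 N))
  | app M₁ M₂, k, N => app (subst M₁ k N) (subst M₂ k N)

end Tm

/-- Values: variables and abstractions. -/
inductive IsValue : Tm → Prop
  | var (n : ℕ) : IsValue (Tm.var n)
  | lam (M : Tm) : IsValue (Tm.lam M)

/-- βv-reduction: the closure of the root rule `(λx.M)V ↦βv M[V/x]` (for `V` a value)
under arbitrary contexts. -/
inductive Betav : Tm → Tm → Prop
  | beta {M V} : IsValue V → Betav (Tm.app (Tm.lam M) V) (M.subst 0 V)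
  | lam {M M'} : Betav M M' → Betav (Tm.lam M) (Tm.lam M')
  | appL {M M' N} : Betav M M' → Betav (Tm.app M N) (Tm.app M' N)
  | appR {M N N'} : Betav N N' → Betav (Tm.app M N) (Tm.app M N')

/-- Weak reduction: the closure of `↦βv` under weak contexts `W ::= ⟨⟩ | W M | M W`. -/
inductive Weakv : Tm → Tm → Prop
  | beta {M V} : IsValue V → Weakv (Tm.app (Tm.lam M) V) (M.subst 0 V)
  | appL {M M' N} : Weakv M M' → Weakv (Tm.app M N) (Tm.app M' N)
  | appR {M N N'} : Weakv N N' → Weakv (Tm.app M N) (Tm.app M N')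

/-- The unbiased strategy `⊳`: perform weak steps as long as possible; once the term has
no weak redex, iterate in the subterms (in arbitrary order). -/
inductive UnbV : Tm → Tm → Prop
  | weak {M M'} : Weakv M M' → UnbV M M'
  | lam {P P'} : (∀ s, ¬ Weakv (Tm.lam P) s) → UnbV P P' → UnbV (Tm.lam P) (Tm.lam P')
  | appL {P P' Q} : (∀ s, ¬ Weakv (Tm.app P Q) s) → UnbV P P' →
      UnbV (Tm.app P Q) (Tm.app P' Q)
  | appR {P Q Q'} : (∀ s, ¬ Weakv (Tm.app P Q) s) → UnbV Q Q' →
      UnbV (Tm.app P Q) (Tm.app P Q')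

open Relation

/-!
Call a step *internal* if it takes place under an abstraction. By Plotkin's argument, every
reduction is standard: a weak reduction followed by an internal one, which is standard again inside
each outermost abstraction. The difficulty is that steps are compared as pairs of terms, so that an
internal step may also be a weak step. For example, `(λx.(λy.C) x) V → (λy.C) V` arises both by
contracting the redex in the body and by contracting the outer one. However, in a standard reduction
from `(λx.P) V` to `(λx.Q) V` such a coincidence means that contracting the outer redex first leads
to `(λx.P') V` with a strictly shorter standard reduction from `P'` to `Q`. By induction on the
length, every reduction factors into a weak one and one without weak steps. If its last term has a
weak redex, so do all terms of the second part, which then has no `⊳`-step; otherwise the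
factorization proceeds inside the subterms.
-/

section RelationLemmas

variable {α β : Type*} {r : α → α → Prop} {a b : α}

theorem reflTransGen_invariant {p : α → Prop} (hp : ∀ {x y}, r x y → p x → p y)
    (h : ReflTransGen r a b) (ha : p a) : p b := by
  induction h with
  | refl => exact ha
  | tail _ hr ih => exact hp hr ih

theorem reflTransGen_lift_along {p : β → β → Prop} (f : α → β) (h : ReflTransGen r a b)
    (hf : ∀ {x y}, ReflTransGen r a x → r x y → ReflTransGen r y b → ReflGen p (f x) (f y)) :
    ReflTransGen p (f a) (f b) := by
  induction h with
  | refl => exact .refl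
  | tail hax hxy ih =>
    exact (ih fun ha hr hb => hf ha hr (hb.tail hxy)).trans
      (hf hax hxy .refl).to_reflTransGen

end RelationLemmas

namespace Tm

theorem lift_lift {i d : ℕ} (h : i ≤ d) (M : Tm) :
    lift (d + 1) (lift i M) = lift i (lift d M) := by
  induction M generalizing i d with
  | var n => grind [lift]
  | lam M ih => simp only [lift, ih (Nat.succ_le_succ h)]
  | app M N ihM ihN => simp only [lift, ihM h, ihN h]

theorem subst_lift_self (k : ℕ) (M V : Tm) : subst (lift k M) k V = M := by
  induction M generalizing k V with
  | var n => grind [lift, subst]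
  | lam M ih => simp only [lift, subst, ih]
  | app M N ihM ihN => simp only [lift, subst, ihM, ihN]

theorem lift_subst_of_le {k d : ℕ} (h : k ≤ d) (M V : Tm) :
    lift d (subst M k V) = subst (lift (d + 1) M) k (lift d V) := by
  induction M generalizing k d V with
  | var n => grind [lift, subst]
  | lam M ih =>
    simp only [subst, lift, ih (Nat.succ_le_succ h), lift_lift (Nat.zero_le d)]
  | app M N ihM ihN => simp only [lift, subst, ihM h, ihN h]

theorem subst_lift_of_le {i k : ℕ} (h : i ≤ k) (M V : Tm) :
    subst (lift i M) (k + 1) (lift i V) = lift i (subst M k V) := by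
  induction M generalizing i k V with
  | var n => grind [lift, subst]
  | lam M ih =>
    simp only [subst, lift, ← lift_lift (Nat.zero_le i), ih (Nat.succ_le_succ h)]
  | app M N ihM ihN => simp only [lift, subst, ihM h, ihN h]

theorem subst_subst {i k : ℕ} (h : i ≤ k) (M V W : Tm) :
    subst (subst M i V) k W = subst (subst M (k + 1) (lift i W)) i (subst V k W) := by
  induction M generalizing i k V W with
  | var n => grind [subst, subst_lift_self]
  | lam M ih =>
    simp only [subst, ih (Nat.succ_le_succ h), lift_lift (Nat.zero_le i),
      subst_lift_of_le (Nat.zero_le k)]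
  | app M N ihM ihN => simp only [subst, ihM h, ihN h]

theorem iterate_lift_zero_succ (k : ℕ) (V : Tm) :
    (lift 0)^[k + 1] V = lift k ((lift 0)^[k] V) := by
  induction k with
  | zero => rfl
  | succ k ih =>
    rw [Function.iterate_succ_apply', ih, ← lift_lift (Nat.zero_le k),
      ← Function.iterate_succ_apply' (lift 0), ih]

theorem lift_ne_var_self (d : ℕ) (M : Tm) : lift d M ≠ var d := by
  cases M <;> grind [lift]

/-- Substitution, under `k` binders, for the variable that is bound just outside of them. -/
def substUnder (M : Tm) (k : ℕ) (V : Tm) : Tm :=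
  M.subst k ((lift 0)^[k] V)

theorem substUnder_app (M N : Tm) (k : ℕ) (V : Tm) :
    (app M N).substUnder k V = app (M.substUnder k V) (N.substUnder k V) := rfl

theorem substUnder_lam (M : Tm) (k : ℕ) (V : Tm) :
    (lam M).substUnder k V = lam (M.substUnder (k + 1) V) := by
  simp only [substUnder, subst, Function.iterate_succ_apply']

end Tm

open Tm

namespace IsValue

variable {V W : Tm}

theorem lift (hV : IsValue V) (d : ℕ) : IsValue (V.lift d) := by
  cases hV with
  | var n => simp only [Tm.lift]; split_ifs <;> constructor
  | lam M => constructor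

theorem iterate_lift (hV : IsValue V) (k : ℕ) : IsValue ((Tm.lift 0)^[k] V) := by
  induction k with
  | zero => exact hV
  | succ k ih => rw [Function.iterate_succ_apply']; exact ih.lift 0

theorem subst (hV : IsValue V) (k : ℕ) (hW : IsValue W) : IsValue (V.subst k W) := by
  cases hV with
  | var n => simp only [Tm.subst]; split_ifs <;> first | exact hW | constructor
  | lam M => constructor

theorem not_app {M N : Tm} : ¬ IsValue (app M N) := nofun

theorem not_weakv {N : Tm} (hV : IsValue V) : ¬ Weakv V N := by
  cases hV <;> nofun

theorem of_betav (h : Betav V W) (hV : IsValue V) : IsValue W := by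
  cases hV with
  | var n => cases h
  | lam M => cases h; constructor

end IsValue

namespace Weakv

variable {M N V : Tm}

theorem betav (h : Weakv M N) : Betav M N := by
  induction h with
  | beta hV => exact .beta hV
  | appL _ ih => exact .appL ih
  | appR _ ih => exact .appR ih

theorem lift (h : Weakv M N) (d : ℕ) : Weakv (M.lift d) (N.lift d) := by
  induction h with
  | beta hV => rw [lift_subst_of_le (Nat.zero_le d)]; exact .beta (hV.lift d)
  | appL _ ih => exact .appL ih
  | appR _ ih => exact .appR ih

theorem subst (h : Weakv M N) (k : ℕ) (hV : IsValue V) :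
    Weakv (M.subst k V) (N.subst k V) := by
  induction h with
  | beta hW => rw [subst_subst (Nat.zero_le k)]; exact .beta (hW.subst k hV)
  | appL _ ih => exact .appL ih
  | appR _ ih => exact .appR ih

theorem substUnder (h : Weakv M N) (k : ℕ) (hV : IsValue V) :
    Weakv (M.substUnder k V) (N.substUnder k V) :=
  h.subst k (hV.iterate_lift k)

theorem eq_subst_of_isValue {P : Tm} (hV : IsValue V) (h : Weakv (app (lam P) V) N) :
    N = P.subst 0 V := by
  cases h with
  | beta => rfl
  | appL h => cases h
  | appR h => exact (hV.not_weakv h).elim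

end Weakv

/-- Weak reductions of a given length. -/
inductive WeakSteps : ℕ → Tm → Tm → Prop
  | refl (M : Tm) : WeakSteps 0 M M
  | head {c M M' N} : Weakv M M' → WeakSteps c M' N → WeakSteps (c + 1) M N

namespace WeakSteps

variable {c d : ℕ} {M M' N N' : Tm}

theorem reflTransGen (h : WeakSteps c M N) : ReflTransGen Weakv M N := by
  induction h with
  | refl => exact .refl
  | head w _ ih => exact .head w ih

theorem reflTransGen_betav (h : WeakSteps c M N) : ReflTransGen Betav M N :=
  h.reflTransGen.lift id fun _ _ => Weakv.betav

theorem lift (h : WeakSteps c M N) (k : ℕ) : WeakSteps c (M.lift k) (N.lift k) := by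
  induction h with
  | refl => exact .refl _
  | head w _ ih => exact .head (w.lift k) ih

theorem subst {V : Tm} (h : WeakSteps c M N) (k : ℕ) (hV : IsValue V) :
    WeakSteps c (M.subst k V) (N.subst k V) := by
  induction h with
  | refl => exact .refl _
  | head w _ ih => exact .head (w.subst k hV) ih

theorem trans (h : WeakSteps c M M') (h' : WeakSteps d M' N) : WeakSteps (c + d) M N := by
  induction h with
  | refl => rwa [Nat.zero_add]
  | head w _ ih => rw [Nat.add_right_comm]; exact .head w (ih h')

theorem appL (h : WeakSteps c M M') (N : Tm) : WeakSteps c (app M N) (app M' N) := by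
  induction h with
  | refl => exact .refl _
  | head w _ ih => exact .head (.appL w) ih

theorem appR (M : Tm) (h : WeakSteps c N N') : WeakSteps c (app M N) (app M N') := by
  induction h with
  | refl => exact .refl _
  | head w _ ih => exact .head (.appR w) ih

end WeakSteps

/-- Standard reductions without weak steps: inside each outermost abstraction, a weak reduction
followed by a reduction of the same kind, with applications reduced from left to right. The index
counts the βv-steps. -/
inductive Internal : ℕ → Tm → Tm → Prop
  | var (i : ℕ) : Internal 0 (var i) (var i)
  | lam {c n P P₀ Q} : WeakSteps c P P₀ → Internal n P₀ Q → Internal (c + n) (lam P) (lam Q)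
  | app {m n P Q R S} : Internal m P Q → Internal n R S → Internal (m + n) (app P R) (app Q S)

/-- Standard reductions in the sense of Plotkin, as a weak reduction followed by an internal one.
The index counts the βv-steps. -/
def Standard (n : ℕ) (M N : Tm) : Prop :=
  ∃ c m L, WeakSteps c M L ∧ Internal m L N ∧ c + m = n

theorem Internal.refl (M : Tm) : Internal 0 M M := by
  induction M with
  | var i => exact .var i
  | lam M ih => exact .lam (.refl M) ih
  | app M N ihM ihN => exact .app ihM ihN

namespace Standard

variable {c m n : ℕ} {M M' N P P' Q R R' : Tm}

theorem of_internal (h : Internal n M N) : Standard n M N :=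
  ⟨0, n, M, .refl M, h, Nat.zero_add n⟩

theorem weakSteps (h : WeakSteps c M M') (h' : Standard n M' N) : Standard (c + n) M N := by
  obtain ⟨d, m, L, hw, hi, rfl⟩ := h'
  exact ⟨c + d, m, L, h.trans hw, hi, Nat.add_assoc c d m⟩

theorem head (h : Weakv M M') (h' : Standard n M' N) : Standard (n + 1) M N :=
  Nat.add_comm 1 n ▸ h'.weakSteps (.head h (.refl M'))

theorem lam (h : Standard n P Q) : Standard n (lam P) (lam Q) := by
  obtain ⟨c, m, P₀, hw, hi, rfl⟩ := h
  exact of_internal (.lam hw hi)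

theorem app (h : Standard n P P') (h' : Standard m R R') :
    Standard (n + m) (app P R) (app P' R') := by
  obtain ⟨c, n', P₀, hw, hi, rfl⟩ := h
  obtain ⟨d, m', R₀, hw', hi', rfl⟩ := h'
  exact ⟨c + d, n' + m', _, (hw.appL R).trans (hw'.appR P₀), hi.app hi',
    Nat.add_add_add_comm c d n' m'⟩

end Standard

namespace Internal

variable {n : ℕ} {M N : Tm}

theorem lift (h : Internal n M N) (k : ℕ) : Internal n (M.lift k) (N.lift k) := by
  induction h generalizing k with
  | var i => exact .refl _
  | lam hw _ ih => exact .lam (hw.lift _) (ih _)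
  | app _ _ ih ih' => exact .app (ih k) (ih' k)

theorem isValue_iff (h : Internal n M N) : IsValue M ↔ IsValue N := by
  cases h with
  | var => rfl
  | lam => exact ⟨fun _ => .lam _, fun _ => .lam _⟩
  | app => exact iff_of_false IsValue.not_app IsValue.not_app

end Internal

theorem Standard.lift {n : ℕ} {M N : Tm} (h : Standard n M N) (k : ℕ) :
    Standard n (M.lift k) (N.lift k) := by
  obtain ⟨c, m, L, hw, hi, rfl⟩ := h
  exact ⟨c, m, L.lift k, hw.lift k, hi.lift k, rfl⟩

theorem Internal.subst {m n k : ℕ} {M N V V' : Tm} (h : Internal n M N) (hV : IsValue V)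
    (hVV' : Standard m V V') : ∃ l, Standard l (M.subst k V) (N.subst k V') := by
  induction h generalizing k V V' with
  | var i =>
    simp only [Tm.subst]
    split_ifs
    · exact ⟨m, hVV'⟩
    all_goals exact ⟨0, .of_internal (.refl _)⟩
  | lam hw _ ih =>
    obtain ⟨l, hl⟩ := ih (k := k + 1) (hV.lift 0) (hVV'.lift 0)
    exact ⟨_, (hl.weakSteps (hw.subst _ (hV.lift 0))).lam⟩
  | app _ _ ih ih' =>
    obtain ⟨l, hl⟩ := ih hV hVV'
    obtain ⟨l', hl'⟩ := ih' hV hVV'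
    exact ⟨_, hl.app hl'⟩

theorem Internal.tail {n : ℕ} {M N N' : Tm} (h : Internal n M N) (hN : Betav N N') :
    ∃ l, Standard l M N' := by
  induction h generalizing N' with
  | var i => cases hN
  | lam hw _ ih =>
    cases hN with
    | lam hQ =>
      obtain ⟨l, hl⟩ := ih hQ
      exact ⟨_, (hl.weakSteps hw).lam⟩
  | app hP hR ihP ihR =>
    cases hN with
    | appL hP' =>
      obtain ⟨l, hl⟩ := ihP hP'
      exact ⟨_, hl.app (.of_internal hR)⟩
    | appR hR' =>
      obtain ⟨l, hl⟩ := ihR hR'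
      exact ⟨_, (Standard.of_internal hP).app hl⟩
    | beta hV' =>
      have hV := hR.isValue_iff.2 hV'
      cases hP with
      | lam hw hi =>
        obtain ⟨l, hl⟩ := hi.subst (k := 0) hV (.of_internal hR)
        exact ⟨_, .head (.beta hV) (hl.weakSteps (hw.subst 0 hV))⟩

theorem exists_standard_of_reflTransGen_betav {M N : Tm} (h : ReflTransGen Betav M N) :
    ∃ n, Standard n M N := by
  induction h with
  | refl => exact ⟨0, .of_internal (.refl M)⟩
  | tail _ hs ih =>
    obtain ⟨_, c, m, L, hw, hi, -⟩ := ih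
    obtain ⟨l, hl⟩ := hi.tail hs
    exact ⟨_, hl.weakSteps hw⟩

theorem Internal.reflTransGen_betav {n : ℕ} {M N : Tm} (h : Internal n M N) :
    ReflTransGen Betav M N := by
  induction h with
  | var i => exact .refl
  | lam hw _ ih =>
    exact (hw.reflTransGen_betav.trans ih).lift Tm.lam fun _ _ => .lam
  | app _ _ ih ih' =>
    exact (ih.lift (Tm.app · _) fun _ _ => .appL).trans (ih'.lift (Tm.app _ ·) fun _ _ => .appR)

theorem Standard.reflTransGen_betav {n : ℕ} {M N : Tm} (h : Standard n M N) :
    ReflTransGen Betav M N := by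
  obtain ⟨c, m, L, hw, hi, -⟩ := h
  exact hw.reflTransGen_betav.trans hi.reflTransGen_betav

namespace Tm

theorem subst_eq_lam {k : ℕ} {M N V : Tm} (h : M.subst k V = lam N) :
    M = var k ∧ V = lam N ∨ ∃ M', M = lam M' ∧ M'.subst (k + 1) (lift 0 V) = N := by
  cases M <;> grind [subst]

theorem subst_eq_app {k : ℕ} {M P Q V : Tm} (hV : IsValue V)
    (h : M.subst k V = app P Q) :
    ∃ M₁ M₂, M = app M₁ M₂ ∧ M₁.subst k V = P ∧ M₂.subst k V = Q := by
  cases M with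
  | var n =>
    simp only [subst] at h
    split_ifs at h
    exact (IsValue.not_app (h ▸ hV)).elim
  | lam M => cases h
  | app M₁ M₂ => cases h; exact ⟨M₁, M₂, rfl, rfl, rfl⟩

theorem substUnder_eq_lam_app_self {k : ℕ} {M N V : Tm} (hV : IsValue V)
    (h : M.substUnder k V = lam (app M N)) :
    k = 0 ∧ M = var 0 := by
  rcases subst_eq_lam h with ⟨rfl, hV'⟩ | ⟨M', hM, h'⟩
  · cases k with
    | zero => exact ⟨rfl, rfl⟩
    | succ k =>
      -- `lift k U = lam (app (var (k + 1)) N)` is impossible, as `var (k + 1)` is not in the range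
      -- of `lift (k + 1)`.
      rw [iterate_lift_zero_succ] at hV'
      generalize (lift 0)^[k] V = U at hV'
      rcases U with _ | (_ | _ | ⟨A, B⟩) | _ <;> grind [lift, lift_ne_var_self]
  · rw [← Function.iterate_succ_apply' (lift 0)] at h'
    obtain ⟨M₁, M₂, rfl, h₁, -⟩ := subst_eq_app (hV.iterate_lift _) h'
    subst hM
    exact absurd (substUnder_eq_lam_app_self hV h₁).1 k.succ_ne_zero
termination_by M
decreasing_by all_goals grind

theorem subst_lam_ne_lam_app_of_betav {k : ℕ} {M N P : Tm} (h : Betav M N) :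
    M.subst k (lam P) ≠ lam (app (var 0) N) := by
  intro hM
  rcases subst_eq_lam hM with ⟨rfl, -⟩ | ⟨M', rfl, hM'⟩
  · cases h
  obtain ⟨M₁, M₂, rfl, h₁, h₂⟩ := subst_eq_app (.lam _) hM'
  obtain rfl : M₁ = var 0 := by cases M₁ <;> grind [subst, lift]
  cases h with
  | lam h =>
    cases h with
    | appL h => cases h
    | appR h => exact subst_lam_ne_lam_app_of_betav h h₂
termination_by M
decreasing_by all_goals grind

end Tm

/-- Let `Z → Z'` be a step below `k` binders under an abstraction that is applied to `V`. If `k = 0`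
and `W = V`, this says that `(λx.Z) V → (λx.Z') V` is also a weak step, contracting the outer redex.
The case of arbitrary `k` and `W` is the form that the equation takes in the subterms of `Z`. -/
def Coincides (k : ℕ) (V W Z Z' : Tm) : Prop :=
  Z.substUnder k V = app (lam Z') W

theorem coincides_app_lam_iff {k : ℕ} {R V W Z Z' : Tm} :
    Coincides k V W (app (lam Z) R) (app (lam Z') R) ↔
      Coincides (k + 1) V R Z Z' ∧ R.substUnder k V = W := by
  simp only [Coincides, substUnder_app, substUnder_lam, app.injEq, lam.injEq]

theorem weakv_app_lam_iff_coincides {V Z Z' : Tm} (hV : IsValue V) :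
    Weakv (app (lam Z) V) (app (lam Z') V) ↔ Coincides 0 V V Z Z' :=
  ⟨fun h => (h.eq_subst_of_isValue hV).symm, fun h => h ▸ .beta hV⟩

theorem not_coincides_appR {k : ℕ} {V W Z Z' : Tm} (P : Tm) (hV : IsValue V)
    (hW : k = 0 → W = V) (h : Betav Z Z') : ¬ Coincides k V W (app P Z) (app P Z') := by
  intro hc
  obtain ⟨hP, hZ⟩ := Tm.app.inj hc
  obtain ⟨rfl, rfl⟩ := substUnder_eq_lam_app_self hV hP
  obtain rfl : V = lam (app (var 0) Z') := hP
  exact subst_lam_ne_lam_app_of_betav h (hZ.trans (hW rfl))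

theorem not_weakv_app_lam_of_betav {Q V V' : Tm} (hV : IsValue V) (h : Betav V V') :
    ¬ Weakv (app (lam Q) V) (app (lam Q) V') := by
  intro hw
  obtain ⟨Q₁, Q₂, rfl, h₁, h₂⟩ := subst_eq_app hV (hw.eq_subst_of_isValue hV).symm
  obtain ⟨-, rfl⟩ := substUnder_eq_lam_app_self (k := 0) hV h₁
  obtain rfl : V = lam (app (var 0) Q₂) := h₁
  cases h with
  | lam h =>
    cases h with
    | appL h => cases h
    | appR h => exact subst_lam_ne_lam_app_of_betav h h₂

/-- Either `P` reduces to `Q` without any coinciding step, or the substitution instance of `P`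
weakly reduces to a redex whose body has a shorter standard reduction to `Q`. -/
def Resolvable (k : ℕ) (V W : Tm) (n : ℕ) (P Q : Tm) : Prop :=
  ReflTransGen (fun Z Z' => Betav Z Z' ∧ ¬ Coincides k V W Z Z') P Q ∨
    ∃ c m P', c + m < n ∧ WeakSteps c (P.substUnder k V) (app (lam P') W) ∧ Standard m P' Q

namespace Resolvable

variable {c k m n : ℕ} {P P' Q R R' V W : Tm}

theorem head (hV : IsValue V) (hw : Weakv P P') (hs : Standard n P' Q)
    (h : Resolvable k V W n P' Q) : Resolvable k V W (n + 1) P Q := by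
  by_cases hc : Coincides k V W P P'
  · exact .inr ⟨0, n, P', by omega, hc ▸ .refl _, hs⟩
  · rcases h with h | ⟨c, m, P'', hlt, hw', hs'⟩
    · exact .inl (.head ⟨hw.betav, hc⟩ h)
    · exact .inr ⟨c + 1, m, P'', by omega, .head (hw.substUnder k hV) hw', hs'⟩

theorem weakSteps (hV : IsValue V) (hw : WeakSteps c P P') (hs : Standard n P' Q)
    (h : Resolvable k V W n P' Q) : Resolvable k V W (c + n) P Q := by
  induction hw with
  | refl => rwa [Nat.zero_add]
  | head w hw ih =>
    rw [Nat.add_right_comm]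
    exact .head hV w (hs.weakSteps hw) (ih hs h)

theorem lam (h : ReflTransGen Betav P Q) : Resolvable k V W n (lam P) (lam Q) :=
  .inl (h.lift Tm.lam fun _ _ hs => ⟨.lam hs, nofun⟩)

theorem app (hV : IsValue V) (hW : k = 0 → W = V) (hR : ReflTransGen Betav R R')
    (hP : ReflTransGen
      (fun Z Z' => Betav Z Z' ∧ ¬ Coincides k V W (app Z R) (app Z' R)) P P') :
    Resolvable k V W n (app P R) (app P' R') :=
  .inl <| (hP.lift (Tm.app · R) fun _ _ hs => ⟨.appL hs.1, hs.2⟩).trans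
    (hR.lift (Tm.app P' ·) fun _ _ hs => ⟨.appR hs, not_coincides_appR P' hV hW hs⟩)

/- A step in the body `P` of `(λP) R` can coincide only if `R[V] = W`. The substitution instance of
`(λP) R` is then a redex `(λP[V]) W` as it stands, which yields the second alternative unless the
steps from `P` to `Q` avoid coincidence one level deeper, with `R` in place of `W`. -/
theorem app_lam (hV : IsValue V) (hW : k = 0 → W = V) (hR : Standard m R R')
    (hP : ReflTransGen Betav P Q) (h : Resolvable (k + 1) V R n P Q) :
    Resolvable k V W (n + m) (Tm.app (.lam P) R) (Tm.app (.lam Q) R') := by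
  by_cases hRW : R.substUnder k V = W
  · rcases h with h | ⟨c, l, P', hlt, hw, hP'⟩
    · exact app hV hW hR.reflTransGen_betav <|
        h.lift Tm.lam fun _ _ ht => ⟨.lam ht.1, fun hc => ht.2 (coincides_app_lam_iff.1 hc).1⟩
    · refine .inr ⟨0, c + (l + m), P.substUnder (k + 1) V, by omega, ?_,
        (hP'.lam.app hR).weakSteps hw⟩
      rw [substUnder_app, substUnder_lam, hRW]
      exact .refl _
  · exact app hV hW hR.reflTransGen_betav <|
      hP.lift Tm.lam fun _ _ ht => ⟨.lam ht, fun hc => hRW (coincides_app_lam_iff.1 hc).2⟩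

theorem of_internal (hV : IsValue V) {n : ℕ} {P Q : Tm} (h : Internal n P Q) {k : ℕ} {W : Tm}
    (hW : k = 0 → W = V) : Resolvable k V W n P Q := by
  cases h with
  | var => exact .inl .refl
  | lam hw hP => exact .lam (hw.reflTransGen_betav.trans hP.reflTransGen_betav)
  | app hP hR =>
    cases hP with
    | var => exact .app hV hW hR.reflTransGen_betav .refl
    | lam hw hP =>
      exact .app_lam hV hW (.of_internal hR) (hw.reflTransGen_betav.trans hP.reflTransGen_betav)
        (.weakSteps hV hw (.of_internal hP) (of_internal hV hP nofun))
    | app hA hB =>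
      exact .app hV hW hR.reflTransGen_betav <|
        (hA.reflTransGen_betav.lift (Tm.app · _) fun _ _ hs => ⟨.appL hs, nofun⟩).trans
          (hB.reflTransGen_betav.lift (Tm.app _ ·) fun _ _ hs => ⟨.appR hs, nofun⟩)
termination_by Q

theorem of_standard (hV : IsValue V) (h : Standard n P Q) : Resolvable 0 V V n P Q := by
  obtain ⟨c, m, L, hw, hi, rfl⟩ := h
  exact .weakSteps hV hw (.of_internal hi) (of_internal hV hi fun _ => rfl)

end Resolvable

/-- A βv-step which is not a step of the strategy `S`. -/
def OffBetav (S : Tm → Tm → Prop) (M N : Tm) : Prop :=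
  Betav M N ∧ ¬ S M N

theorem OffBetav.reflTransGen_betav {S : Tm → Tm → Prop} {M N : Tm}
    (h : ReflTransGen (OffBetav S) M N) : ReflTransGen Betav M N :=
  h.lift id fun _ _ hs => hs.1

theorem factorization_app_lam {n : ℕ} {P Q V : Tm} (hV : IsValue V) (h : Standard n P Q) :
    ∃ U, ReflTransGen Weakv (app (lam P) V) U ∧
      ReflTransGen (OffBetav Weakv) U (app (lam Q) V) := by
  induction n using Nat.strong_induction_on generalizing P with
  | _ n ih =>
    rcases Resolvable.of_standard hV h with hPQ | ⟨c, m, P', hlt, hw, hP'⟩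
    · exact ⟨_, .refl, hPQ.lift (fun Z => app (lam Z) V) fun _ _ hs =>
        ⟨.appL (.lam hs.1), hs.2 ∘ (weakv_app_lam_iff_coincides hV).1⟩⟩
    · obtain ⟨U, hP'U, hUQ⟩ := ih m (by omega) hP'
      exact ⟨U, .head (.beta hV) (hw.reflTransGen.trans hP'U), hUQ⟩

/-- Root redexes of the rule `↦βv`. -/
inductive IsRedex : Tm → Prop
  | mk (P : Tm) {V : Tm} : IsValue V → IsRedex (app (lam P) V)

namespace IsRedex

variable {P P' R R' : Tm}

theorem of_betav_left (h : Betav P P') (hr : IsRedex (app P R)) : IsRedex (app P' R) := by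
  cases hr with
  | mk _ hV => cases h; exact .mk _ hV

theorem of_betav_right (h : Betav R R') (hr : IsRedex (app P R)) : IsRedex (app P R') := by
  cases hr with
  | mk _ hV => exact .mk _ (hV.of_betav h)

end IsRedex

theorem Internal.isRedex_iff {n : ℕ} {M N : Tm} (h : Internal n M N) :
    IsRedex M ↔ IsRedex N := by
  constructor
  · rintro ⟨P, hV⟩
    rcases h with _ | _ | ⟨⟨⟩, hR⟩
    exact .mk _ (hR.isValue_iff.1 hV)
  · rintro ⟨Q, hV⟩
    rcases h with _ | _ | ⟨⟨⟩, hR⟩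
    exact .mk _ (hR.isValue_iff.2 hV)

theorem Weakv.of_app_left {M M' N : Tm} (h : Weakv (app M N) (app M' N)) :
    Weakv M M' ∨ M = M' ∨ IsRedex (app M N) := by
  generalize hL : app M' N = L at h
  cases h with
  | beta hV => exact .inr (.inr (.mk _ hV))
  | appL h => cases hL; exact .inl h
  | appR h => cases hL; exact .inr (.inl rfl)

theorem Weakv.of_app_right {M N N' : Tm} (h : Weakv (app M N) (app M N')) :
    Weakv N N' ∨ N = N' ∨ IsRedex (app M N) := by
  generalize hL : app M N' = L at h
  cases h with
  | beta hV => exact .inr (.inr (.mk _ hV))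
  | appL h => cases hL; exact .inr (.inl rfl)
  | appR h => cases hL; exact .inl h

namespace OffBetav

variable {S : Tm → Tm → Prop} {P P' Q R R' V V' : Tm}

theorem reflGen_map {f : Tm → Tm} (hf : Betav (f P) (f Q)) (hS : S (f P) (f Q) → P = Q) :
    ReflGen (OffBetav S) (f P) (f Q) := by
  by_cases h : S (f P) (f Q)
  · rw [hS h]
  · exact .single ⟨hf, h⟩

theorem weakv_appL (h : ReflTransGen (OffBetav Weakv) P P') (hr : ¬ IsRedex (app P' R)) :
    ReflTransGen (OffBetav Weakv) (app P R) (app P' R) :=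
  reflTransGen_lift_along (app · R) h fun _ hxy hy =>
    reflGen_map (f := (app · R)) (.appL hxy.1) fun hw =>
      (hw.of_app_left.resolve_left hxy.2).resolve_right fun hx =>
        hr <| reflTransGen_invariant (p := fun Z => IsRedex (app Z R)) .of_betav_left
          (.head hxy.1 (reflTransGen_betav hy)) hx

theorem weakv_appR (h : ReflTransGen (OffBetav Weakv) R R') (hr : ¬ IsRedex (app P R')) :
    ReflTransGen (OffBetav Weakv) (app P R) (app P R') :=
  reflTransGen_lift_along (app P ·) h fun _ hxy hy =>
    reflGen_map (.appR hxy.1) fun hw =>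
      (hw.of_app_right.resolve_left hxy.2).resolve_right fun hx =>
        hr <| reflTransGen_invariant (p := fun Z => IsRedex (app P Z)) .of_betav_right
          (.head hxy.1 (reflTransGen_betav hy)) hx

theorem weakv_app_lam_right (hV : IsValue V) (h : ReflTransGen Betav V V') :
    ReflTransGen (OffBetav Weakv) (app (lam Q) V) (app (lam Q) V') :=
  reflTransGen_lift_along (app (lam Q) ·) h fun hx hxy _ =>
    .single ⟨.appR hxy,
      not_weakv_app_lam_of_betav (reflTransGen_invariant .of_betav hx hV) hxy⟩

end OffBetav

theorem Internal.weak_factorization {n : ℕ} {M N : Tm} (h : Internal n M N) :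
    ∃ U, ReflTransGen Weakv M U ∧ ReflTransGen (OffBetav Weakv) U N := by
  induction h with
  | var => exact ⟨_, .refl, .refl⟩
  | lam hw h =>
    have hPQ := hw.reflTransGen_betav.trans h.reflTransGen_betav
    exact ⟨_, .refl, hPQ.lift Tm.lam fun _ _ hs => ⟨.lam hs, nofun⟩⟩
  | @app _ _ P P' R R' hP hR ihP ihR =>
    by_cases hr : IsRedex (Tm.app P' R')
    · rcases hr with ⟨Q, hR'⟩
      have hV := hR.isValue_iff.2 hR'
      cases hP with
      | lam hw hi =>
        obtain ⟨U, hU, hUQ⟩ := factorization_app_lam hV ((Standard.of_internal hi).weakSteps hw)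
        exact ⟨U, hU, hUQ.trans (OffBetav.weakv_app_lam_right hV hR.reflTransGen_betav)⟩
    · obtain ⟨P₀, hP₀, hP₀P'⟩ := ihP
      obtain ⟨R₀, hR₀, hR₀R'⟩ := ihR
      have hr₀ : ¬ IsRedex (Tm.app P' R₀) :=
        hr ∘ reflTransGen_invariant (p := fun Z => IsRedex (Tm.app P' Z)) .of_betav_right
          (OffBetav.reflTransGen_betav hR₀R')
      exact ⟨Tm.app P₀ R₀,
        (hP₀.lift (Tm.app · R) fun _ _ => .appL).trans
          (hR₀.lift (Tm.app P₀ ·) fun _ _ => .appR),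
        (OffBetav.weakv_appL hP₀P' hr₀).trans (OffBetav.weakv_appR hR₀R' hr)⟩

/-- Terms without weak redexes. -/
def WeakNormal (M : Tm) : Prop :=
  ∀ N, ¬ Weakv M N

theorem weakNormal_lam (M : Tm) : WeakNormal (lam M) := nofun

theorem weakNormal_app_iff {M N : Tm} :
    WeakNormal (app M N) ↔ WeakNormal M ∧ WeakNormal N ∧ ¬ IsRedex (app M N) := by
  refine ⟨fun h => ⟨fun _ hw => h _ (.appL hw), fun _ hw => h _ (.appR hw), ?_⟩, ?_⟩
  · rintro ⟨P, hV⟩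
    exact h _ (.beta hV)
  · rintro ⟨hM, hN, hr⟩ _ (hV | hw | hw)
    exacts [hr (.mk _ hV), hM _ hw, hN _ hw]

namespace WeakNormal

variable {M N : Tm}

theorem isValue_of_betav (hM : WeakNormal M) (h : Betav M N) (hN : IsValue N) :
    IsValue M := by
  cases h with
  | beta hV => exact (hM _ (.beta hV)).elim
  | lam => exact .lam _
  | appL => exact (IsValue.not_app hN).elim
  | appR => exact (IsValue.not_app hN).elim

theorem eq_lam_of_betav {P : Tm} (hM : WeakNormal M) (h : Betav M (lam P)) :
    ∃ Q, M = lam Q := by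
  cases hM.isValue_of_betav h (.lam P) with
  | var => cases h
  | lam Q => exact ⟨Q, rfl⟩

theorem of_betav (h : Betav M N) (hM : WeakNormal M) : WeakNormal N := by
  induction h with
  | beta hV => exact (hM _ (.beta hV)).elim
  | lam => exact weakNormal_lam _
  | appL h ih =>
    obtain ⟨hM, hN, hr⟩ := weakNormal_app_iff.1 hM
    refine weakNormal_app_iff.2 ⟨ih hM, hN, fun ⟨P, hV⟩ => ?_⟩
    obtain ⟨Q, rfl⟩ := hM.eq_lam_of_betav h
    exact hr (.mk Q hV)
  | appR h ih =>
    obtain ⟨hM, hN, hr⟩ := weakNormal_app_iff.1 hM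
    exact weakNormal_app_iff.2
      ⟨hM, ih hN, fun ⟨P, hV⟩ => hr (.mk P (hN.isValue_of_betav h hV))⟩

theorem of_reflTransGen_betav (h : ReflTransGen Betav M N) (hM : WeakNormal M) :
    WeakNormal N :=
  reflTransGen_invariant of_betav h hM

theorem appL {M' : Tm} (h : ReflTransGen Betav M M') (hn : WeakNormal (app M N)) :
    WeakNormal (app M' N) :=
  hn.of_reflTransGen_betav (h.lift (app · N) fun _ _ => .appL)

theorem appR {N' : Tm} (h : ReflTransGen Betav N N') (hn : WeakNormal (app M N)) :
    WeakNormal (app M N') :=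
  hn.of_reflTransGen_betav (h.lift (app M ·) fun _ _ => .appR)

end WeakNormal

theorem Internal.weakNormal {n : ℕ} {M N : Tm} (h : Internal n M N) (hN : WeakNormal N) :
    WeakNormal M := by
  induction h with
  | var => exact hN
  | lam => exact weakNormal_lam _
  | app hP hR ihP ihR =>
    obtain ⟨hP', hR', hr⟩ := weakNormal_app_iff.1 hN
    exact weakNormal_app_iff.2 ⟨ihP hP', ihR hR', hr ∘ (hP.app hR).isRedex_iff.1⟩

namespace UnbV

variable {M M' N N' P P' R R' : Tm}

theorem betav (h : UnbV M N) : Betav M N := by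
  induction h with
  | weak h => exact h.betav
  | lam _ _ ih => exact .lam ih
  | appL _ _ ih => exact .appL ih
  | appR _ _ ih => exact .appR ih

theorem weakv_or_weakNormal (h : UnbV M N) : Weakv M N ∨ WeakNormal M := by
  cases h with
  | weak hw => exact .inl hw
  | lam hn | appL hn | appR hn => exact .inr hn

theorem of_lam (h : UnbV (Tm.lam P) (Tm.lam P')) : UnbV P P' := by
  cases h with
  | weak hw => cases hw
  | lam _ h => exact h

theorem of_app_left (hn : WeakNormal (app M N)) (h : UnbV (app M N) (app M' N)) :
    UnbV M M' ∨ M = M' := by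
  cases h with
  | weak hw => exact (hn _ hw).elim
  | appL _ h => exact .inl h
  | appR => exact .inr rfl

theorem of_app_right (hn : WeakNormal (app M N)) (h : UnbV (app M N) (app M N')) :
    UnbV N N' ∨ N = N' := by
  cases h with
  | weak hw => exact (hn _ hw).elim
  | appL => exact .inr rfl
  | appR _ h => exact .inl h

theorem reflTransGen_betav (h : ReflTransGen UnbV M N) : ReflTransGen Betav M N :=
  h.lift id fun _ _ => betav

theorem reflTransGen_appL (hn : WeakNormal (app P R)) (h : ReflTransGen UnbV P P') :
    ReflTransGen UnbV (app P R) (app P' R) :=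
  reflTransGen_lift_along (app · R) h fun hx hxy _ =>
    .single (.appL (hn.appL (reflTransGen_betav hx)) hxy)

theorem reflTransGen_appR (hn : WeakNormal (app P R)) (h : ReflTransGen UnbV R R') :
    ReflTransGen UnbV (app P R) (app P R') :=
  reflTransGen_lift_along (app P ·) h fun hx hxy _ =>
    .single (.appR (hn.appR (reflTransGen_betav hx)) hxy)

end UnbV

namespace OffBetav

variable {M N P P' R R' : Tm}

theorem unbV_lam (h : ReflTransGen (OffBetav UnbV) P P') :
    ReflTransGen (OffBetav UnbV) (lam P) (lam P') :=
  h.lift Tm.lam fun _ _ hs => ⟨.lam hs.1, hs.2 ∘ UnbV.of_lam⟩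

theorem unbV_appL (hn : WeakNormal (app P R)) (h : ReflTransGen (OffBetav UnbV) P P') :
    ReflTransGen (OffBetav UnbV) (app P R) (app P' R) :=
  reflTransGen_lift_along (app · R) h fun hx hxy _ =>
    reflGen_map (f := (app · R)) (.appL hxy.1) fun hu =>
      (hu.of_app_left (hn.appL (reflTransGen_betav hx))).resolve_left hxy.2

theorem unbV_appR (hn : WeakNormal (app P R)) (h : ReflTransGen (OffBetav UnbV) R R') :
    ReflTransGen (OffBetav UnbV) (app P R) (app P R') :=
  reflTransGen_lift_along (app P ·) h fun hx hxy _ =>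
    reflGen_map (.appR hxy.1) fun hu =>
      (hu.of_app_right (hn.appR (reflTransGen_betav hx))).resolve_left hxy.2

theorem unbV_of_weakv (hN : ¬ WeakNormal N) (h : ReflTransGen (OffBetav Weakv) M N) :
    ReflTransGen (OffBetav UnbV) M N :=
  reflTransGen_lift_along id h fun _ hxy hy =>
    .single ⟨hxy.1, fun hu => hu.weakv_or_weakNormal.elim hxy.2 fun hx =>
      hN (hx.of_reflTransGen_betav (.head hxy.1 (reflTransGen_betav hy)))⟩

end OffBetav

theorem Internal.unbiased_factorization {n : ℕ} {M N : Tm} (h : Internal n M N) :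
    ∃ U, ReflTransGen UnbV M U ∧ ReflTransGen (OffBetav UnbV) U N := by
  induction h with
  | var => exact ⟨_, .refl, .refl⟩
  | @lam _ _ P _ _ hw _ ih =>
    obtain ⟨U, hU, hUQ⟩ := ih
    have hPU : ReflTransGen UnbV P U := (hw.reflTransGen.lift id fun _ _ => .weak).trans hU
    exact ⟨Tm.lam U, hPU.lift Tm.lam fun _ _ => .lam (weakNormal_lam _),
      OffBetav.unbV_lam hUQ⟩
  | @app _ _ P P' R R' hP hR ihP ihR =>
    by_cases hn' : WeakNormal (Tm.app P' R')
    · obtain ⟨P₀, hP₀, hP₀P'⟩ := ihP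
      obtain ⟨R₀, hR₀, hR₀R'⟩ := ihR
      have hn : WeakNormal (Tm.app P R) := (hP.app hR).weakNormal hn'
      have hn₁ : WeakNormal (Tm.app P₀ R) := hn.appL (UnbV.reflTransGen_betav hP₀)
      have hn₂ : WeakNormal (Tm.app P₀ R₀) := hn₁.appR (UnbV.reflTransGen_betav hR₀)
      have hn₃ : WeakNormal (Tm.app P' R₀) := hn₂.appL (OffBetav.reflTransGen_betav hP₀P')
      exact ⟨Tm.app P₀ R₀,
        (UnbV.reflTransGen_appL hn hP₀).trans (UnbV.reflTransGen_appR hn₁ hR₀),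
        (OffBetav.unbV_appL hn₂ hP₀P').trans (OffBetav.unbV_appR hn₃ hR₀R')⟩
    · obtain ⟨U, hU, hUN⟩ := (hP.app hR).weak_factorization
      exact ⟨U, hU.lift id fun _ _ => .weak, OffBetav.unbV_of_weakv hn' hUN⟩

/-- **Unbiased-strategy factorization for Call-by-Value**: if `M →βv* N` then there is a
term `U` with `M ⊳* U` and `U ⋫* N`, where `⋫` is a βv-step which is not a `⊳`-step. -/
theorem cbv_unbiased_factorization (M N : Tm) (h : Relation.ReflTransGen Betav M N) :
    ∃ U : Tm, Relation.ReflTransGen UnbV M U ∧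
      Relation.ReflTransGen (fun a b => Betav a b ∧ ¬ UnbV a b) U N := by
  obtain ⟨_, _, _, _, hw, hi, -⟩ := exists_standard_of_reflTransGen_betav h
  obtain ⟨U, hLU, hUN⟩ := hi.unbiased_factorization
  exact ⟨U, (hw.reflTransGen.lift id fun _ _ => .weak).trans hLU, hUN⟩
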